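/- There exists a constant c > 0 such that for every integer n ≥ 2 and every real polynomial p in two variables of total degree at most n, the maximum of |p| over the closed unit disk K = {x ∈ ℝ² : x₁² + x₂² ≤ 1} satisfies ‖p‖_K ≤ c (log n)² · max_{0≤j≤n, 0≤k≤2n} |p(r_j cos φ_k, r_j sin φ_k)|, where r_j = 1/2 + (1/2)cos(jπ/n) for 0 ≤ j ≤ n and φ_k = 2πk/(2n+1) for 0 ≤ k ≤ 2n. -/

import Mathlib

open MvPolynomial Real Set

/-- the unit circle parametrisation -/
noncomputable def ee (t : ℝ) : ℂ := Complex.exp (t * Complex.I)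

lemma ee_add (s t : ℝ) : ee (s + t) = ee s * ee t := by
  simp only [ee, ← Complex.exp_add]; congr 1; push_cast; ring

lemma ee_ne (s : ℝ) : ee s ≠ 0 := Complex.exp_ne_zero _

lemma ee_norm (s : ℝ) : ‖ee s‖ = 1 := Complex.norm_exp_ofReal_mul_I s

lemma ee_nat (k : ℕ) (s : ℝ) : ee (k * s) = ee s ^ k := by
  simp only [ee, ← Complex.exp_nat_mul]; congr 1; push_cast; ring

lemma ee_int (k : ℤ) (s : ℝ) : ee (k * s) = ee s ^ k := by
  simp only [ee, ← Complex.exp_int_mul]; congr 1; push_cast; ring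

lemma ee_neg (s : ℝ) : ee (-s) = (ee s)⁻¹ := by
  simp only [ee, ← Complex.exp_neg]; congr 1; push_cast; ring

lemma ee_prim (N : ℕ) (hN : N ≠ 0) : IsPrimitiveRoot (ee (2 * π / N)) N := by
  have := Complex.isPrimitiveRoot_exp N hN
  convert this using 1
  simp only [ee]; congr 1; push_cast; ring

lemma ee_cos (t : ℝ) : ee t * (Real.cos t : ℂ) = (ee t ^ 2 + 1) / 2 := by
  have h : ee t * ee (-t) = 1 := by rw [ee_neg]; exact mul_inv_cancel₀ (ee_ne t)
  have h2 : (Real.cos t : ℂ) = (ee t + ee (-t)) / 2 := by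
    rw [Complex.ofReal_cos, Complex.cos]; simp [ee]
  rw [h2]; linear_combination h / 2

lemma ee_sin (t : ℝ) : ee t * (Real.sin t : ℂ) = (1 - ee t ^ 2) * Complex.I / 2 := by
  have h : ee t * ee (-t) = 1 := by rw [ee_neg]; exact mul_inv_cancel₀ (ee_ne t)
  have h2 : (Real.sin t : ℂ) = (ee (-t) - ee t) * Complex.I / 2 := by
    rw [Complex.ofReal_sin, Complex.sin]; simp [ee]
  rw [h2]; linear_combination h * Complex.I / 2

lemma interp {N : ℕ} {ω : ℂ} (hω : IsPrimitiveRoot ω N) (hN : N ≠ 0)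
    (P : Polynomial ℂ) (hP : P.natDegree < N) (z : ℂ) :
    N * P.eval z = ∑ k ∈ Finset.range N, P.eval (ω ^ k) *
      ∑ j ∈ Finset.range N, (z * (ω ^ k)⁻¹) ^ j := by
  have hω0 : ω ≠ 0 := hω.ne_zero hN
  have orth : ∀ m ∈ Finset.range N, ∀ j ∈ Finset.range N,
      ∑ k ∈ Finset.range N, (ω ^ m * (ω ^ j)⁻¹) ^ k = if j = m then (N : ℂ) else 0 := by
    intro m hm j hj
    split_ifs with h
    · subst h
      rw [mul_inv_cancel₀ (pow_ne_zero _ hω0)]; simp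
    · have h1 : ω ^ m * (ω ^ j)⁻¹ ≠ 1 := by
        intro hc
        apply h
        rw [← div_eq_mul_inv, div_eq_one_iff_eq (pow_ne_zero _ hω0)] at hc
        exact (hω.pow_inj (Finset.mem_range.1 hm) (Finset.mem_range.1 hj) hc).symm
      rw [geom_sum_eq h1]
      have : (ω ^ m * (ω ^ j)⁻¹) ^ N = 1 := by
        rw [mul_pow, inv_pow, ← pow_mul, ← pow_mul, mul_comm m, mul_comm j, pow_mul, pow_mul,
          hω.pow_eq_one]; simp
      rw [this]; simp
  simp only [Polynomial.eval_eq_sum_range' hP]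
  calc _ = ∑ m ∈ Finset.range N, ∑ j ∈ Finset.range N, P.coeff m * z ^ j *
        (if j = m then (N : ℂ) else 0) := by
        rw [Finset.mul_sum]
        refine Finset.sum_congr rfl fun m hm => ?_
        simp only [mul_ite, mul_zero, Finset.sum_ite_eq', hm, if_true]; ring
    _ = ∑ m ∈ Finset.range N, ∑ j ∈ Finset.range N, ∑ k ∈ Finset.range N, P.coeff m * z ^ j *
        (ω ^ m * (ω ^ j)⁻¹) ^ k := by
        refine Finset.sum_congr rfl fun m hm => Finset.sum_congr rfl fun j hj => ?_
        rw [← orth m hm j hj, Finset.mul_sum]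
    _ = ∑ m ∈ Finset.range N, ∑ k ∈ Finset.range N, ∑ j ∈ Finset.range N, P.coeff m * z ^ j *
        (ω ^ m * (ω ^ j)⁻¹) ^ k := Finset.sum_congr rfl fun m hm => Finset.sum_comm
    _ = _ := by
        rw [Finset.sum_comm]
        refine Finset.sum_congr rfl fun k hk => ?_
        rw [Finset.sum_mul_sum]
        refine Finset.sum_congr rfl fun m hm => Finset.sum_congr rfl fun j hj => ?_
        rw [mul_pow, mul_pow, inv_pow, inv_pow, ← pow_mul, ← pow_mul, ← pow_mul, ← pow_mul,
          mul_comm m, mul_comm j]; ring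

lemma ker_le (N : ℕ) (t : ℝ) : ‖∑ j ∈ Finset.range N, (ee t) ^ j‖ ≤ N := by
  refine (norm_sum_le _ _).trans ?_
  simp [ee_norm]

lemma ker_le' (N : ℕ) (t s : ℝ) (hs : 0 < s) (h : s ≤ |Real.sin (t / 2)|) :
    ‖∑ j ∈ Finset.range N, (ee t) ^ j‖ ≤ 1 / s := by
  have h0 : ‖ee t - 1‖ = 2 * |Real.sin (t / 2)| := by
    rw [ee, mul_comm, Complex.norm_exp_I_mul_ofReal_sub_one]; simp
  have h1 : ee t ≠ 1 := by
    intro hc; rw [hc] at h0; simp at h0; rw [h0] at h; simp at h; linarith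
  rw [geom_sum_eq h1, norm_div, h0, div_le_div_iff₀ (by linarith) hs]
  have : ‖ee t ^ N - 1‖ ≤ 2 := by
    refine (norm_sub_le _ _).trans ?_
    simp [ee_norm]; norm_num
  nlinarith [norm_nonneg (ee t ^ N - 1)]

lemma ker_sum (M : ℕ) (θ : ℝ) (h0 : 0 ≤ θ) (h1 : θ ≤ 2 * π / (M + 2 : ℕ)) :
    ∑ k ∈ Finset.range (M + 2), ‖∑ j ∈ Finset.range (M + 2),
      (ee (θ - 2 * π * k / (M + 2 : ℕ))) ^ j‖ ≤ (M + 2 : ℕ) * (3 + Real.log (M + 2 : ℕ)) := by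
  set N : ℝ := ((M + 2 : ℕ) : ℝ) with hNdef
  have hN : N = M + 2 := by rw [hNdef]; push_cast; ring
  have hN0 : 0 < N := by rw [hN]; positivity
  have key : ∀ k ∈ Finset.range M, ‖∑ j ∈ Finset.range (M + 2),
      (ee (θ - 2 * π * (k + 1 + 1 : ℕ) / N)) ^ j‖ ≤
        N / 2 * (((k : ℝ) + 1)⁻¹ + (((M - 1 - k : ℕ) : ℝ) + 1)⁻¹) := by
    intro k hk
    have hk := Finset.mem_range.1 hk
    have hc : (((M - 1 - k : ℕ) : ℝ) + 1) = M - k := by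
      have : M - 1 - k + 1 + k = M := by omega
      have : (((M - 1 - k + 1 + k : ℕ)) : ℝ) = M := by rw [this]
      push_cast at this; linarith
    rw [hc]
    have hkM : (0:ℝ) < M - k := by
      have : (k:ℝ) < M := by exact_mod_cast hk
      linarith
    set x := π * (k + 2) / N - θ / 2 with hx
    have hx1 : π * (k + 1) / N ≤ x := by
      have : π * (k + 2) / N = π * (k + 1) / N + (2 * π / N) / 2 := by ring
      rw [hx, this]; linarith
    have hx2 : x ≤ π - π * (M - k) / N := by
      have : π - π * (M - k) / N = π * (k + 2) / N := by
        field_simp; rw [hN]; ring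
      rw [hx, this]; linarith
    have hsin : |Real.sin ((θ - 2 * π * (k + 1 + 1 : ℕ) / N) / 2)| = |Real.sin x| := by
      rw [← abs_neg, ← Real.sin_neg]; congr 2; rw [hx]; push_cast; ring
    have hpos1 : 0 ≤ π * (k + 1) / N := by positivity
    have hpos2 : 0 ≤ π * (M - k) / N := by positivity
    rcases le_total x (π / 2) with hle | hle
    · have := Real.mul_le_sin (hpos1.trans hx1) hle
      have hs0 : 0 < 2 * ((k : ℝ) + 1) / N := by positivity
      refine (ker_le' _ _ _ hs0 ?_).trans ?_
      · rw [hsin]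
        refine le_trans ?_ (le_abs_self _)
        refine le_trans ?_ this
        refine le_trans (le_of_eq ?_) (mul_le_mul_of_nonneg_left hx1 (show 0 ≤ 2 / π by positivity))
        field_simp
      · rw [mul_add (N / 2)]
        have hq0 : 0 ≤ N / 2 * ((M : ℝ) - k)⁻¹ := by positivity
        refine le_trans (le_of_eq ?_) (le_add_of_nonneg_right hq0)
        field_simp
    · have := Real.mul_le_sin (x := π - x) (by linarith) (by linarith)
      rw [Real.sin_pi_sub] at this
      have hs0 : 0 < 2 * ((M : ℝ) - k) / N := by positivity
      refine (ker_le' _ _ _ hs0 ?_).trans ?_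
      · rw [hsin]
        refine le_trans ?_ (le_abs_self _)
        refine le_trans ?_ this
        refine le_trans (le_of_eq ?_)
          (mul_le_mul_of_nonneg_left (show π * (M - k) / N ≤ π - x by linarith)
            (show 0 ≤ 2 / π by positivity))
        field_simp
      · rw [mul_add (N / 2)]
        have hq0 : 0 ≤ N / 2 * ((k : ℝ) + 1)⁻¹ := by positivity
        refine le_trans (le_of_eq ?_) (le_add_of_nonneg_left hq0)
        field_simp
  have harm : ∑ k ∈ Finset.range M, ((k : ℝ) + 1)⁻¹ ≤ 1 + Real.log N := by
    have h := harmonic_le_one_add_log M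
    have h2 : ((harmonic M : ℚ) : ℝ) = ∑ k ∈ Finset.range M, ((k : ℝ) + 1)⁻¹ := by
      simp [harmonic]
    rw [h2] at h
    refine h.trans ?_
    rcases Nat.eq_zero_or_pos M with rfl | hM
    · simp; apply Real.log_nonneg; rw [hN]; push_cast; linarith
    · have : Real.log M ≤ Real.log N := Real.log_le_log (by exact_mod_cast hM) (by rw [hN]; linarith)
      linarith
  have harm' : ∑ k ∈ Finset.range M, (((M - 1 - k : ℕ) : ℝ) + 1)⁻¹ ≤ 1 + Real.log N := by
    rw [Finset.sum_range_reflect (fun k : ℕ => ((k : ℝ) + 1)⁻¹) M]; exact harm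
  rw [Finset.sum_range_succ', Finset.sum_range_succ']
  have hs := Finset.sum_le_sum key
  rw [← Finset.mul_sum, Finset.sum_add_distrib] at hs
  have a1 := ker_le (M + 2) (θ - 2 * π * (0 + 1 : ℕ) / N)
  have a2 := ker_le (M + 2) (θ - 2 * π * (0 : ℕ) / N)
  rw [← hNdef] at a1 a2
  have : N / 2 * (∑ k ∈ Finset.range M, ((k : ℝ) + 1)⁻¹ +
    ∑ k ∈ Finset.range M, (((M - 1 - k : ℕ) : ℝ) + 1)⁻¹) ≤ N / 2 * (2 * (1 + Real.log N)) := by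
    apply mul_le_mul_of_nonneg_left _ (by positivity); linarith
  linarith

lemma circ0 (M : ℕ) (P : Polynomial ℂ) (hP : P.natDegree < M + 2) (B : ℝ) (hB : 0 ≤ B)
    (h : ∀ k < M + 2, ‖P.eval (ee (2 * π * k / (M + 2 : ℕ)))‖ ≤ B) (θ : ℝ)
    (h0 : 0 ≤ θ) (h1 : θ ≤ 2 * π / (M + 2 : ℕ)) :
    ‖P.eval (ee θ)‖ ≤ (3 + Real.log (M + 2 : ℕ)) * B := by
  have hi := interp (ee_prim (M + 2) (by omega)) (by omega) P hP (ee θ)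
  have hk := ker_sum M θ h0 h1
  have hpow : ∀ k : ℕ, ee (2 * π / (M + 2 : ℕ)) ^ k = ee (2 * π * k / (M + 2 : ℕ)) := by
    intro k; rw [← ee_nat]; congr 1; ring
  simp only [hpow, ← ee_neg, ← ee_add, ← sub_eq_add_neg] at hi
  have hN0 : (0:ℝ) < (M + 2 : ℕ) := by positivity
  have : ((M + 2 : ℕ) : ℝ) * ‖P.eval (ee θ)‖ ≤ ((M + 2 : ℕ) : ℝ) *
      ((3 + Real.log (M + 2 : ℕ)) * B) := by
    calc _ = ‖((M + 2 : ℕ) : ℂ) * P.eval (ee θ)‖ := by rw [norm_mul, Complex.norm_natCast]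
      _ = ‖∑ k ∈ Finset.range (M + 2), P.eval (ee (2 * π * k / (M + 2 : ℕ))) *
          ∑ j ∈ Finset.range (M + 2), (ee (θ - 2 * π * k / (M + 2 : ℕ))) ^ j‖ := by rw [hi]
      _ ≤ _ := norm_sum_le _ _
      _ ≤ ∑ k ∈ Finset.range (M + 2), B * ‖∑ j ∈ Finset.range (M + 2),
          (ee (θ - 2 * π * k / (M + 2 : ℕ))) ^ j‖ := by
        refine Finset.sum_le_sum fun k hk => ?_
        rw [norm_mul]
        exact mul_le_mul_of_nonneg_right (h k (Finset.mem_range.1 hk)) (norm_nonneg _)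
      _ ≤ _ := by
        rw [← Finset.mul_sum]
        refine (mul_le_mul_of_nonneg_left hk hB).trans (le_of_eq (by ring))
  exact le_of_mul_le_mul_left this hN0

lemma circ (N : ℕ) (hN : 2 ≤ N) (P : Polynomial ℂ) (hP : P.natDegree < N) (B : ℝ) (hB : 0 ≤ B)
    (h : ∀ k < N, ‖P.eval (ee (2 * π * k / N))‖ ≤ B) (θ : ℝ) :
    ‖P.eval (ee θ)‖ ≤ (3 + Real.log N) * B := by
  obtain ⟨M, rfl⟩ : ∃ M, N = M + 2 := ⟨N - 2, by omega⟩
  have hN0 : (0:ℝ) < (M + 2 : ℕ) := by positivity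
  have hall : ∀ k : ℤ, ‖P.eval (ee (k * (2 * π / (M + 2 : ℕ))))‖ ≤ B := by
    intro k
    have hnn := Int.emod_nonneg k (show ((M + 2 : ℕ) : ℤ) ≠ 0 by omega)
    have hlt := Int.emod_lt_of_pos k (show 0 < ((M + 2 : ℕ) : ℤ) by omega)
    have e1 : ee (k * (2 * π / (M + 2 : ℕ))) =
        ee (2 * π * (k % ((M + 2 : ℕ) : ℤ)).toNat / (M + 2 : ℕ)) := by
      have : (2 * π * ((k % ((M + 2 : ℕ) : ℤ)).toNat : ℝ) / (M + 2 : ℕ)) =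
          ((k % ((M + 2 : ℕ) : ℤ) : ℤ) : ℝ) * (2 * π / (M + 2 : ℕ)) := by
        have h3 : (((k % ((M + 2 : ℕ) : ℤ)).toNat : ℕ) : ℝ) =
            (((k % ((M + 2 : ℕ) : ℤ)).toNat : ℤ) : ℝ) := by norm_cast
        rw [h3, Int.toNat_of_nonneg hnn]; ring
      rw [this, ee_int, ee_int]
      conv_lhs => rw [← Int.mul_ediv_add_emod k ((M + 2 : ℕ) : ℤ)]
      rw [zpow_add₀ (ee_ne _), zpow_mul, zpow_natCast, (ee_prim (M + 2) (by omega)).pow_eq_one]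
      simp
    rw [e1]
    exact h _ (by omega)
  set d : ℝ := 2 * π / (M + 2 : ℕ) with hd
  have hd0 : 0 < d := by positivity
  set k0 : ℤ := ⌊θ / d⌋ with hk0
  have f1 : k0 * d ≤ θ := by
    have := Int.floor_le (θ / d); rwa [le_div_iff₀ hd0] at this
  have f2 : θ ≤ (k0 + 1) * d := by
    have := (Int.lt_floor_add_one (θ / d)).le; rwa [div_le_iff₀ hd0] at this
  have := circ0 M (P.comp (Polynomial.C (ee (k0 * d)) * Polynomial.X)) (by
      refine lt_of_le_of_lt Polynomial.natDegree_comp_le ?_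
      rw [Polynomial.natDegree_C_mul_X _ (ee_ne _)]; simpa using hP) B hB (by
      intro k hk
      have h2 := hall (k0 + k)
      simp only [Polynomial.eval_comp, Polynomial.eval_mul, Polynomial.eval_C, Polynomial.eval_X,
        ← ee_add]
      have e2 : k0 * d + 2 * π * k / (M + 2 : ℕ) = ((k0 + k : ℤ) : ℝ) * d := by
        rw [hd]; push_cast; ring
      rw [e2]; exact h2) (θ - k0 * d) (by linarith) (by linarith)
  simp only [Polynomial.eval_comp, Polynomial.eval_mul, Polynomial.eval_C, Polynomial.eval_X,
        ← ee_add] at this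
  rwa [add_sub_cancel] at this

lemma cosTrig (r : Polynomial ℝ) (d : ℕ) (hr : r.natDegree ≤ d) :
    ∃ R : Polynomial ℂ, R.natDegree ≤ 2 * d ∧
      ∀ θ, R.eval (ee θ) = ee θ ^ d * (r.eval (Real.cos θ) : ℝ) := by
  refine ⟨∑ m ∈ Finset.range (d + 1), Polynomial.C (r.coeff m : ℂ) *
    (Polynomial.C (1 / 2) * (Polynomial.X ^ 2 + 1)) ^ m * Polynomial.X ^ (d - m), ?_, ?_⟩
  · apply Polynomial.natDegree_sum_le_of_forall_le
    intro m hm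
    have hm : m ≤ d := by simpa [Nat.lt_succ_iff] using hm
    have h1 : (Polynomial.C (1 / 2 : ℂ) * (Polynomial.X ^ 2 + 1)).natDegree ≤ 2 := by
      compute_degree
    have h2 := Polynomial.natDegree_pow_le_of_le m h1
    have h3 : (Polynomial.C (r.coeff m : ℂ)).natDegree ≤ 0 := by simp
    have h4 : (Polynomial.X ^ (d - m) : Polynomial ℂ).natDegree ≤ d - m := by simp
    have := Polynomial.natDegree_mul_le_of_le (Polynomial.natDegree_mul_le_of_le h3 h2) h4
    omega
  · intro θ
    rw [Polynomial.eval_finsetSum, Polynomial.eval_eq_sum_range' (Nat.lt_succ_of_le hr)]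
    push_cast
    rw [Finset.mul_sum]
    refine Finset.sum_congr rfl fun m hm => ?_
    have hm : m ≤ d := by simpa [Nat.lt_succ_iff] using hm
    have e1 : ee θ ^ d = ee θ ^ m * ee θ ^ (d - m) := by rw [← pow_add]; congr 1; omega
    have e2 : ee θ ^ m * (Complex.cos θ) ^ m = ((ee θ ^ 2 + 1) / 2) ^ m := by
      rw [← mul_pow, ← ee_cos]; simp
    simp only [Polynomial.eval_mul, Polynomial.eval_pow, Polynomial.eval_C, Polynomial.eval_X,
      Polynomial.eval_add, Polynomial.eval_one]
    rw [e1, show (1 / 2 : ℂ) * (ee θ ^ 2 + 1) = (ee θ ^ 2 + 1) / 2 by ring, ← e2]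
    ring

lemma polTrig (p : MvPolynomial (Fin 2) ℝ) (n : ℕ) (hp : p.totalDegree ≤ n) (r : ℝ) :
    ∃ R : Polynomial ℂ, R.natDegree ≤ 2 * n ∧
      ∀ θ, R.eval (ee θ) = ee θ ^ n *
        (MvPolynomial.eval ![r * Real.cos θ, r * Real.sin θ] p : ℝ) := by
  have hd : ∀ s ∈ p.support, s 0 + s 1 ≤ n := by
    intro s hs
    have := (MvPolynomial.le_totalDegree hs).trans hp
    rwa [Finsupp.sum_fintype _ _ (by simp), Fin.sum_univ_two] at this
  refine ⟨∑ s ∈ p.support, Polynomial.C ((p.coeff s : ℝ) : ℂ) *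
    (Polynomial.C (r / 2 : ℂ) * (Polynomial.X ^ 2 + 1)) ^ (s 0) *
    (Polynomial.C (r * Complex.I / 2 : ℂ) * (1 - Polynomial.X ^ 2)) ^ (s 1) *
      Polynomial.X ^ (n - (s 0 + s 1)), ?_, ?_⟩
  · apply Polynomial.natDegree_sum_le_of_forall_le
    intro s hs
    have hm := hd s hs
    have h1 : (Polynomial.C (r / 2 : ℂ) * (Polynomial.X ^ 2 + 1)).natDegree ≤ 2 := by
      compute_degree
    have h1' : (Polynomial.C (r * Complex.I / 2 : ℂ) * (1 - Polynomial.X ^ 2)).natDegree ≤ 2 := by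
      compute_degree
    have h2 := Polynomial.natDegree_pow_le_of_le (s 0) h1
    have h2' := Polynomial.natDegree_pow_le_of_le (s 1) h1'
    have h3 : (Polynomial.C ((p.coeff s : ℝ) : ℂ)).natDegree ≤ 0 := by simp
    have h4 : (Polynomial.X ^ (n - (s 0 + s 1)) : Polynomial ℂ).natDegree ≤ n - (s 0 + s 1) := by
      simp
    have := Polynomial.natDegree_mul_le_of_le (Polynomial.natDegree_mul_le_of_le
      (Polynomial.natDegree_mul_le_of_le h3 h2) h2') h4
    omega
  · intro θ
    rw [Polynomial.eval_finsetSum, MvPolynomial.eval_eq']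
    push_cast
    rw [Finset.mul_sum]
    refine Finset.sum_congr rfl fun s hs => ?_
    have hm := hd s hs
    have e1 : ee θ ^ n = ee θ ^ (s 0) * ee θ ^ (s 1) * ee θ ^ (n - (s 0 + s 1)) := by
      rw [← pow_add, ← pow_add]; congr 1; omega
    simp only [Polynomial.eval_mul, Polynomial.eval_pow, Polynomial.eval_C, Polynomial.eval_X,
      Polynomial.eval_add, Polynomial.eval_one, Polynomial.eval_sub, Fin.prod_univ_two]
    rw [e1, show (r / 2 : ℂ) * (ee θ ^ 2 + 1) = r * ((ee θ ^ 2 + 1) / 2) by ring, ← ee_cos,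
      show (r * Complex.I / 2 : ℂ) * (1 - ee θ ^ 2) = r * ((1 - ee θ ^ 2) * Complex.I / 2) by ring,
      ← ee_sin]
    simp only [Matrix.cons_val_zero, Matrix.cons_val_one, mul_pow]
    push_cast
    ring

lemma angular (p : MvPolynomial (Fin 2) ℝ) (n : ℕ) (hn : 1 ≤ n) (hp : p.totalDegree ≤ n) (r : ℝ)
    (B : ℝ) (hB : 0 ≤ B)
    (h : ∀ k ≤ 2 * n, |MvPolynomial.eval ![r * Real.cos (2 * π * k / (2 * n + 1)),
      r * Real.sin (2 * π * k / (2 * n + 1))] p| ≤ B) (θ : ℝ) :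
    |MvPolynomial.eval ![r * Real.cos θ, r * Real.sin θ] p| ≤
      (3 + Real.log (2 * n + 1)) * B := by
  obtain ⟨R, hR, hRe⟩ := polTrig p n hp r
  have hnorm : ∀ θ, ‖R.eval (ee θ)‖ =
      |MvPolynomial.eval ![r * Real.cos θ, r * Real.sin θ] p| := by
    intro θ; rw [hRe, norm_mul, norm_pow, ee_norm, Complex.norm_real]; simp
  have := circ (2 * n + 1) (by omega) R (by omega) B hB (by
    intro k hk
    rw [hnorm]; push_cast; exact h k (by omega)) θ
  rw [hnorm] at this
  exact_mod_cast this

lemma radial (q : Polynomial ℝ) (n : ℕ) (hn : 1 ≤ n) (hq : q.natDegree ≤ n)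
    (B : ℝ) (hB : 0 ≤ B) (h : ∀ j ≤ n, |q.eval (Real.cos (j * π / n))| ≤ B) (ψ : ℝ) :
    |q.eval (Real.cos ψ)| ≤ (1 + 2 * (3 + Real.log (2 * n))) * B := by
  have hn0 : (n : ℝ) ≠ 0 := by positivity
  set a : ℝ := q.coeff n / 2 ^ (n - 1) with ha
  set r := q - Polynomial.C a * Polynomial.Chebyshev.T ℝ n with hr
  have hTd : (Polynomial.Chebyshev.T ℝ n).natDegree = n := by
    rw [Polynomial.Chebyshev.natDegree_T]; simp
  have hTc : (Polynomial.Chebyshev.T ℝ n).coeff n = 2 ^ (n - 1) := by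
    have := Polynomial.Chebyshev.leadingCoeff_T ℝ n
    rw [Polynomial.leadingCoeff, hTd] at this
    simpa using this
  have hrd : r.natDegree ≤ n - 1 := by
    have h1 : r.natDegree ≤ n := by
      refine (Polynomial.natDegree_sub_le _ _).trans (max_le hq ?_)
      exact (Polynomial.natDegree_C_mul_le _ _).trans hTd.le
    have h2 : r.coeff n = 0 := by
      rw [hr, Polynomial.coeff_sub, Polynomial.coeff_C_mul, hTc, ha]
      field_simp; simp
    rw [Polynomial.natDegree_le_iff_coeff_eq_zero] at h1 ⊢
    intro m hm
    rcases eq_or_ne m n with rfl | hne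
    · exact h2
    · exact h1 m (by omega)
  have hre : ∀ t, r.eval (Real.cos t) = q.eval (Real.cos t) - a * Real.cos (n * t) := by
    intro t
    rw [hr, Polynomial.eval_sub, Polynomial.eval_mul, Polynomial.eval_C,
      Polynomial.Chebyshev.T_real_cos]
    simp
  obtain ⟨R, hR, hRe⟩ := cosTrig r (n - 1) hrd
  have hnode : ∀ k < 2 * n, |q.eval (Real.cos (2 * π * k / (2 * n : ℕ)))| ≤ B := by
    intro k hk
    rcases le_or_gt k n with hkn | hkn
    · convert h k hkn using 4
      push_cast; field_simp
    · convert h (2 * n - k) (by omega) using 3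
      rw [← Real.cos_two_pi_sub]
      congr 1
      rw [Nat.cast_sub (by omega)]
      push_cast; field_simp
  have hprim := ee_prim (2 * n) (by omega)
  have hpow : ∀ k : ℕ, ee (2 * π / (2 * n : ℕ)) ^ k = ee (2 * π * k / (2 * n : ℕ)) := by
    intro k; rw [← ee_nat]; congr 1; ring
  have hone : ∀ k : ℕ, ee (2 * π * k / (2 * n : ℕ)) ^ n *
      (Real.cos (n * (2 * π * k / (2 * n : ℕ))) : ℂ) = 1 := by
    intro k
    rw [← ee_nat, ee_cos, ee_nat, ← hpow, ← pow_mul, ← pow_mul,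
      show k * (n * 2) = 2 * n * k by ring, pow_mul, hprim.pow_eq_one]
    norm_num
  have hi := interp hprim (by omega) (Polynomial.X * R) (by
    have := Polynomial.natDegree_mul_le_of_le (Polynomial.natDegree_X_le (R := ℂ)) hR
    omega) 0
  have haB : |a| ≤ B := by
    have hz : ∀ k ∈ Finset.range (2 * n), (Polynomial.X * R).eval (ee (2 * π / (2 * n : ℕ)) ^ k) *
      ∑ j ∈ Finset.range (2 * n), (0 * (ee (2 * π / (2 * n : ℕ)) ^ k)⁻¹) ^ j =
        ee (2 * π * k / (2 * n : ℕ)) ^ n * (q.eval (Real.cos (2 * π * k / (2 * n : ℕ))) : ℝ) - a := by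
      intro k hk
      have hs : ∑ j ∈ Finset.range (2 * n), (0 * (ee (2 * π / (2 * n : ℕ)) ^ k)⁻¹) ^ j = 1 := by
        simp only [zero_mul]
        rw [Finset.sum_eq_single 0] <;> simp +contextual
        omega
      rw [hs, hpow, Polynomial.eval_mul, Polynomial.eval_X, hRe, hre, mul_one, ← mul_assoc,
        ← pow_succ', show n - 1 + 1 = n by omega]
      have := hone k
      rw [Complex.ofReal_sub, Complex.ofReal_mul]
      linear_combination (-(a : ℂ)) * this
    rw [Finset.sum_congr rfl hz, Finset.sum_sub_distrib] at hi
    simp only [Polynomial.eval_mul, Polynomial.eval_X, zero_mul, mul_zero, Finset.sum_const,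
      Finset.card_range, nsmul_eq_mul] at hi
    have hi2 : ((2 * n : ℕ) : ℂ) * a = ∑ k ∈ Finset.range (2 * n),
        ee (2 * π * k / (2 * n : ℕ)) ^ n * (q.eval (Real.cos (2 * π * k / (2 * n : ℕ))) : ℝ) := by
      linear_combination hi
    have hle : ((2 * n : ℕ) : ℝ) * |a| ≤ ((2 * n : ℕ) : ℝ) * B := by
      calc _ = ‖((2 * n : ℕ) : ℂ) * a‖ := by
            rw [norm_mul, Complex.norm_natCast, Complex.norm_real]; rfl
        _ = ‖∑ k ∈ Finset.range (2 * n),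
            ee (2 * π * k / (2 * n : ℕ)) ^ n *
              ((q.eval (Real.cos (2 * π * k / (2 * n : ℕ))) : ℝ) : ℂ)‖ := by rw [hi2]
        _ ≤ ∑ k ∈ Finset.range (2 * n), ‖ee (2 * π * k / (2 * n : ℕ)) ^ n *
              ((q.eval (Real.cos (2 * π * k / (2 * n : ℕ))) : ℝ) : ℂ)‖ := norm_sum_le _ _
        _ ≤ ∑ k ∈ Finset.range (2 * n), B := by
            refine Finset.sum_le_sum fun k hk => ?_
            rw [norm_mul, norm_pow, ee_norm, one_pow, one_mul, Complex.norm_real]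
            exact hnode k (Finset.mem_range.1 hk)
        _ = _ := by simp
    exact le_of_mul_le_mul_left hle (by positivity)
  have hnorm : ∀ t, ‖R.eval (ee t)‖ = |r.eval (Real.cos t)| := by
    intro t; rw [hRe, norm_mul, norm_pow, ee_norm, Complex.norm_real]; simp
  have hac : ∀ t, |a * Real.cos t| ≤ B := by
    intro t; rw [abs_mul]
    exact (mul_le_of_le_one_right (abs_nonneg a) (Real.abs_cos_le_one t)).trans haB
  have hfin := circ (2 * n) (by omega) R (by omega) (2 * B) (by linarith) (by
    intro k hk
    rw [hnorm, hre]
    refine (abs_sub _ _).trans ?_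
    linarith [hnode k hk, hac (n * (2 * π * k / (2 * n : ℕ)))]) ψ
  rw [hnorm] at hfin
  push_cast at hfin
  have : q.eval (Real.cos ψ) = r.eval (Real.cos ψ) + a * Real.cos (n * ψ) := by rw [hre]; ring
  rw [this]
  refine (abs_add_le _ _).trans ?_
  linarith [hac (n * ψ)]

/-- There exists a constant `c > 0` such that for every integer `n ≥ 2`
and every real polynomial `p` in two variables of total degree at most `n`, the maximum
of `|p|` over the closed unit disk is bounded by `c (log n)²` times the maximum of `|p|`
over the polar grid with radii `r_j = 1/2 + (1/2)cos(jπ/n)`, `0 ≤ j ≤ n`, and angles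
`φ_k = 2πk/(2n+1)`, `0 ≤ k ≤ 2n`. -/
theorem stmt0 :
    ∃ c : ℝ, 0 < c ∧
      ∀ n : ℕ, 2 ≤ n →
        ∀ p : MvPolynomial (Fin 2) ℝ, p.totalDegree ≤ n →
          ∀ x : Fin 2 → ℝ, x 0 ^ 2 + x 1 ^ 2 ≤ 1 →
            |MvPolynomial.eval x p| ≤
              c * Real.log n ^ 2 *
                sSup ((fun jk : ℕ × ℕ =>
                    |MvPolynomial.eval
                        ![(1 / 2 + 1 / 2 * Real.cos (jk.1 * π / n)) *
                            Real.cos (2 * π * jk.2 / (2 * n + 1)),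
                          (1 / 2 + 1 / 2 * Real.cos (jk.1 * π / n)) *
                            Real.sin (2 * π * jk.2 / (2 * n + 1))] p|) ''
                  {jk : ℕ × ℕ | jk.1 ≤ n ∧ jk.2 ≤ 2 * n}) := by
  refine ⟨180, by norm_num, ?_⟩
  intro n hn p hp x hx
  set F : ℕ × ℕ → ℝ := (fun jk : ℕ × ℕ =>
                    |MvPolynomial.eval
                        ![(1 / 2 + 1 / 2 * Real.cos (jk.1 * π / n)) *
                            Real.cos (2 * π * jk.2 / (2 * n + 1)),
                          (1 / 2 + 1 / 2 * Real.cos (jk.1 * π / n)) *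
                            Real.sin (2 * π * jk.2 / (2 * n + 1))] p|) with hF
  set S := F '' {jk : ℕ × ℕ | jk.1 ≤ n ∧ jk.2 ≤ 2 * n} with hS
  have hfin : S.Finite := by
    apply Set.Finite.image
    refine (Set.finite_Iic ((n, 2 * n) : ℕ × ℕ)).subset ?_
    rintro ⟨j, k⟩ h
    exact ⟨h.1, h.2⟩
  have hM : ∀ j ≤ n, ∀ k ≤ 2 * n, F (j, k) ≤ sSup S := fun j hj k hk =>
    le_csSup hfin.bddAbove ⟨(j, k), ⟨hj, hk⟩, rfl⟩
  set B := sSup S with hBdef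
  have hB : 0 ≤ B := (abs_nonneg _).trans (hM 0 (by omega) 0 (by omega))
  have hM2 : ∀ j ≤ n, ∀ k ≤ 2 * n, |MvPolynomial.eval
      ![(1 / 2 + 1 / 2 * Real.cos (j * π / n)) * Real.cos (2 * π * k / (2 * n + 1)),
        (1 / 2 + 1 / 2 * Real.cos (j * π / n)) * Real.sin (2 * π * k / (2 * n + 1))] p| ≤ B :=
    fun j hj k hk => hM j hj k hk
  clear hM
  clear_value B
  clear hfin
  clear_value S
  clear hS
  clear_value F
  clear hF
  -- polar coordinates
  obtain ⟨ρ, φ, hρ0, hρ1, hx0, hx1⟩ : ∃ ρ φ : ℝ, 0 ≤ ρ ∧ ρ ≤ 1 ∧ x 0 = ρ * Real.cos φ ∧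
      x 1 = ρ * Real.sin φ := by
    refine ⟨‖(⟨x 0, x 1⟩ : ℂ)‖, Complex.arg ⟨x 0, x 1⟩, norm_nonneg _, ?_, ?_, ?_⟩
    · rw [← sq_le_one_iff₀ (norm_nonneg _), ← Complex.normSq_eq_norm_sq, Complex.normSq_mk]
      linarith
    · rw [Complex.norm_mul_cos_arg]
    · rw [Complex.norm_mul_sin_arg]
  obtain ⟨ψ, hψ⟩ : ∃ ψ, ρ = 1 / 2 + 1 / 2 * Real.cos ψ := by
    refine ⟨Real.arccos (2 * ρ - 1), ?_⟩
    rw [Real.cos_arccos (by linarith) (by linarith)]; ring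
  have hxe : x = ![ρ * Real.cos φ, ρ * Real.sin φ] := by
    ext i; fin_cases i <;> simp [hx0, hx1]
  set L1 := 3 + Real.log (2 * n + 1) with hL1
  set L2 := 1 + 2 * (3 + Real.log (2 * n)) with hL2
  have hnR : (2 : ℝ) ≤ n := by exact_mod_cast hn
  have hL1n : 0 ≤ L1 := by
    have := Real.log_nonneg (show (1:ℝ) ≤ 2 * n + 1 by linarith)
    rw [hL1]; linarith
  have hang : ∀ j ≤ n, |MvPolynomial.eval ![(1 / 2 + 1 / 2 * Real.cos (j * π / n)) * Real.cos φ,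
      (1 / 2 + 1 / 2 * Real.cos (j * π / n)) * Real.sin φ] p| ≤ L1 * B := by
    intro j hj
    exact angular p n (by omega) hp _ B hB (hM2 j hj) φ
  set f : Fin 2 → Polynomial ℝ := ![Polynomial.C (Real.cos φ) * (Polynomial.C (1 / 2) +
    Polynomial.C (1 / 2) * Polynomial.X), Polynomial.C (Real.sin φ) * (Polynomial.C (1 / 2) +
    Polynomial.C (1 / 2) * Polynomial.X)] with hf
  have hqe : ∀ t : ℝ, (MvPolynomial.aeval f p).eval t =
      MvPolynomial.eval ![(1 / 2 + 1 / 2 * t) * Real.cos φ, (1 / 2 + 1 / 2 * t) * Real.sin φ] p := by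
    intro t
    rw [MvPolynomial.aeval_def, MvPolynomial.eval₂_eq', MvPolynomial.eval_eq',
      Polynomial.eval_finsetSum]
    refine Finset.sum_congr rfl fun s _ => ?_
    simp only [hf, Fin.prod_univ_two, Matrix.cons_val_zero, Matrix.cons_val_one,
      Polynomial.algebraMap_eq, Polynomial.eval_mul, Polynomial.eval_pow, Polynomial.eval_C,
      Polynomial.eval_add, Polynomial.eval_X, mul_comm (1 / 2 + 1 / 2 * t)]
  have hqd : (MvPolynomial.aeval f p).natDegree ≤ n := by
    have hlin : ∀ c : ℝ, (Polynomial.C c * (Polynomial.C (1 / 2) +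
        Polynomial.C (1 / 2) * Polynomial.X)).natDegree ≤ 1 := by
      intro c
      refine (Polynomial.natDegree_C_mul_le _ _).trans ?_
      rw [add_comm]; exact Polynomial.natDegree_linear_le
    have := MvPolynomial.aeval_natDegree_le (m := n) (n := 1) p hp f (by
      intro i; fin_cases i
      · exact hlin _
      · exact hlin _)
    simpa using this
  have hrad := radial (MvPolynomial.aeval f p) n (by omega) hqd (L1 * B) (mul_nonneg hL1n hB)
    (fun j hj => by rw [hqe]; exact hang j hj) ψ
  rw [hqe, ← hψ, ← hxe] at hrad
  refine hrad.trans ?_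
  have hlog : 1 / 2 ≤ Real.log n := by
    have := Real.log_le_log (by norm_num) hnR
    linarith [Real.log_two_gt_d9]
  have h3 : Real.log (2 * n + 1) ≤ 3 * Real.log n := by
    have : Real.log ((n : ℝ) ^ 3) = 3 * Real.log n := by rw [Real.log_pow]; norm_num
    rw [← this]
    apply Real.log_le_log (by linarith)
    nlinarith [mul_nonneg (sub_nonneg.2 hnR) (sub_nonneg.2 hnR), sq_nonneg (n:ℝ)]
  have h4 : Real.log (2 * n) ≤ Real.log (2 * n + 1) :=
    Real.log_le_log (by linarith) (by linarith)
  have hl1 : L1 ≤ 9 * Real.log n := by rw [hL1]; linarith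
  have hl2 : L2 ≤ 20 * Real.log n := by rw [hL2]; linarith
  calc L2 * (L1 * B) ≤ (20 * Real.log n) * ((9 * Real.log n) * B) := by
        gcongr
    _ = _ := by ring
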